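/- For every i ∈ Σ_{n+1}, the system of string inequalities indexed by the rigorous paths GP(i) is non-redundant for the string cone C_i; equivalently, the number of facets of C_i equals |GP(i)|. -/

import Mathlib

open scoped Classical

noncomputable section

namespace StringPolytope

/-! ### Words, reduced words, two-moves -/

/-- the simple transposition `s_a = (a, a+1)` acting on `ℕ` (wires are `1, …, n+1`). -/
def sTrans (a : ℕ) : Equiv.Perm ℕ := Equiv.swap a (a + 1)

/-- product `s_{i₁} ⋯ s_{i_N}` of the simple transpositions of a word. -/
def wordProd (w : List ℕ) : Equiv.Perm ℕ := (w.map sTrans).prod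

/-- the longest element `w₀` of the symmetric group on `{1, …, n+1}`,
sending `k ↦ n + 2 - k` there and fixing everything else. -/
def longestPerm (n : ℕ) : Equiv.Perm ℕ :=
  Function.Involutive.toPerm
    (fun k => if 1 ≤ k ∧ k ≤ n + 1 then n + 2 - k else k)
    (by intro k; dsimp only; split_ifs <;> omega)

/-- `w ∈ Σ_{n+1}`: a reduced word of the longest element of `S_{n+1}`,
i.e. a word over `[n] = {1,…,n}` of length `N = n(n+1)/2` whose product is `w₀`. -/
def IsReduced (n : ℕ) (w : List ℕ) : Prop :=
  w.length = n * (n + 1) / 2 ∧ (∀ a ∈ w, 1 ≤ a ∧ a ≤ n) ∧ wordProd w = longestPerm n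

/-- a single 2-move: exchange two adjacent letters `(a, b)` with `|a - b| > 1`. -/
def TwoMoveStep (w w' : List ℕ) : Prop :=
  ∃ u v a b, (a + 1 < b ∨ b + 1 < a) ∧ w = u ++ a :: b :: v ∧ w' = u ++ b :: a :: v

/-- 2-move equivalence of words. -/
def TwoMoveEquiv : List ℕ → List ℕ → Prop := Relation.ReflTransGen TwoMoveStep

/-- `A_n = (1, 2, …, n)`. -/
def ascWord (n : ℕ) : List ℕ := (List.range n).map (· + 1)

/-- `D_n = (n, n-1, …, 1)`. -/
def descWord (n : ℕ) : List ℕ := (ascWord n).reverse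

/-! ### The wiring diagram -/

/-- the letter `i_j` of `w` (1-based index `j`); the node `t_j` lies in column `i_j`. -/
def letterAt (w : List ℕ) (j : ℕ) : ℕ := w.getD (j - 1) 0

/-- `1 ≤ j ≤ N`: `t_j` is an actual node of the diagram. -/
def ValidNode (w : List ℕ) (j : ℕ) : Prop := 1 ≤ j ∧ j ≤ w.length

/-- the column-to-wire assignment just above node `t_j`
(at the top of the diagram, wire `k` is in column `k`). -/
def stateAbove (w : List ℕ) (j : ℕ) : Equiv.Perm ℕ := wordProd (w.take (j - 1))

/-- the column-to-wire assignment just below node `t_j`. -/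
def stateBelow (w : List ℕ) (j : ℕ) : Equiv.Perm ℕ := wordProd (w.take j)

/-- one of the two wires crossing at node `t_j` (the one leaving upward-left). -/
def wireX (w : List ℕ) (j : ℕ) : ℕ := stateAbove w j (letterAt w j)

/-- the other wire crossing at node `t_j` (the one leaving upward-right). -/
def wireY (w : List ℕ) (j : ℕ) : ℕ := stateAbove w j (letterAt w j + 1)

/-- the node `t_j` lies on the wire `ℓ_r`. -/
def NodeOnWire (w : List ℕ) (j r : ℕ) : Prop := wireX w j = r ∨ wireY w j = r

/-- given one wire `r` at node `t_j`, the other wire crossing there. -/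
def otherWire (w : List ℕ) (j r : ℕ) : ℕ := if wireX w j = r then wireY w j else wireX w j

/-- the column of wire `ℓ_r` at the height of node `t_j`. -/
def wireCol (w : List ℕ) (j r : ℕ) : ℕ := (stateBelow w j).symm r

/-- node `t_j` lies strictly below the wire `ℓ_{n+1}`
(which runs from the bottom-left corner to the top-right corner). -/
def BelowWireLast (n : ℕ) (w : List ℕ) (j : ℕ) : Prop :=
  wireCol w j (n + 1) < letterAt w j

/-- node `t_j` lies strictly above the wire `ℓ_{n+1}`. -/
def AboveWireLast (n : ℕ) (w : List ℕ) (j : ℕ) : Prop :=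
  letterAt w j + 1 < wireCol w j (n + 1)

/-- node `t_j` lies strictly below the wire `ℓ_1`
(which runs from the bottom-right corner to the top-left corner). -/
def BelowWireOne (w : List ℕ) (j : ℕ) : Prop :=
  letterAt w j + 1 < wireCol w j 1

/-- node `t_j` lies strictly above the wire `ℓ_1`. -/
def AboveWireOne (w : List ℕ) (j : ℕ) : Prop :=
  wireCol w j 1 < letterAt w j

/-! ### Rigorous (Gleizer–Postnikov) paths

A path in `G(i, k)` is encoded by `k` together with the list of its switching
nodes, in order of travel.  Wires `ℓ_1, …, ℓ_k` are oriented upward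
(decreasing node index) and the remaining wires downward. -/

/-- the (1-based indices of the) nodes lying on wire `ℓ_r`, in order of increasing index. -/
def nodesOn (w : List ℕ) (r : ℕ) : List ℕ :=
  ((List.range w.length).map (· + 1)).filter (fun j => decide (NodeOnWire w j r))

/-- nodes on wire `ℓ_r` strictly between the nodes `t_a` and `t_b`. -/
def segList (w : List ℕ) (r a b : ℕ) : List ℕ :=
  (nodesOn w r).filter (fun j => decide (min a b < j ∧ j < max a b))

/-- nodes on wire `ℓ_r` strictly below the node `t_a`. -/
def tailList (w : List ℕ) (r a : ℕ) : List ℕ :=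
  (nodesOn w r).filter (fun j => decide (a < j))

/-- a forbidden fragment of `G(i, k)`: the path passes straight through node `t_j`
travelling along the wire `ℓ_r`, where the other wire `ℓ_b` crossing there has the same
orientation as `ℓ_r` and (`r < b` if both upward, `r > b` if both downward). -/
def Forbidden (w : List ℕ) (k j r : ℕ) : Prop :=
  (r ≤ k ∧ otherWire w j r ≤ k ∧ r < otherWire w j r) ∨
  (k < r ∧ k < otherWire w j r ∧ otherWire w j r < r)

/-- travelling in `G(i,k)`: currently on wire `ℓ_r` at node `t_a` (just switched there),
with future switching nodes `ms`; the travel is legal and ends at `L_{k+1}`. -/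
def TravelOK (w : List ℕ) (k : ℕ) : ℕ → ℕ → List ℕ → Prop
  | r, a, [] => r = k + 1 ∧ ∀ j ∈ tailList w r a, ¬ Forbidden w k j r
  | r, a, m :: ms =>
      ValidNode w m ∧ NodeOnWire w m r ∧
      (if r ≤ k then m < a else a < m) ∧
      (∀ j ∈ segList w r a m, ¬ Forbidden w k j r) ∧
      TravelOK w k (otherWire w m r) m ms

/-- all nodes visited after the switch at node `t_a` onto wire `ℓ_r`. -/
def visitTail (w : List ℕ) : ℕ → ℕ → List ℕ → List ℕ
  | r, a, [] => tailList w r a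
  | r, a, m :: ms => segList w r a m ++ m :: visitTail w (otherWire w m r) m ms

/-- the list of all nodes visited by the path (switching nodes and straight passes). -/
def visitList (w : List ℕ) (k : ℕ) : List ℕ → List ℕ
  | [] => []
  | m :: ms => tailList w k m ++ m :: visitTail w (otherWire w m k) m ms

/-- `(k, ms)` encodes a rigorous (Gleizer–Postnikov) path in `G(i, k)`:
it starts at `L_k` going up the wire `ℓ_k`, switches wires exactly at the nodes
listed in `ms`, respects the orientation, ends at `L_{k+1}`, contains no forbidden
fragment and passes through each node at most once. -/
def IsGPPath (n : ℕ) (w : List ℕ) (k : ℕ) (ms : List ℕ) : Prop :=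
  1 ≤ k ∧ k ≤ n ∧
  (match ms with
   | [] => False
   | m :: rest =>
       ValidNode w m ∧ NodeOnWire w m k ∧
       (∀ j ∈ tailList w k m, ¬ Forbidden w k j k) ∧
       TravelOK w k (otherWire w m k) m rest) ∧
  (visitList w k ms).Nodup

/-- the set `GP(i)` of all rigorous paths of `G(i)`. -/
def GP (n : ℕ) (w : List ℕ) : Set (ℕ × List ℕ) := {p | IsGPPath n w p.1 p.2}

/-- `|GP(i)|`, the number of rigorous paths. -/
def numGP (n : ℕ) (w : List ℕ) : ℕ := (GP n w).ncard

/-- the successive switches of a path: `(node, from-wire, to-wire)`. -/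
def pathSwitches (w : List ℕ) : ℕ → List ℕ → List (ℕ × ℕ × ℕ)
  | _, [] => []
  | r, m :: ms => (m, r, otherWire w m r) :: pathSwitches w (otherWire w m r) ms

/-- the wire-expression of a path: the successive wires travelled. -/
def wireSeq (w : List ℕ) : ℕ → List ℕ → List ℕ
  | r, [] => [r]
  | r, m :: ms => r :: wireSeq w (otherWire w m r) ms

/-- the peaks of a path: switching nodes where the path switches from an
upward wire to a downward wire. -/
def peaks (w : List ℕ) (k : ℕ) (ms : List ℕ) : List ℕ :=
  ((pathSwitches w k ms).filter (fun e => decide (e.2.1 ≤ k ∧ k < e.2.2))).map (·.1)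

/-! ### String cone, `λ`-cone, string polytope -/

/-- `N = n(n+1)/2`, the number of nodes. -/
abbrev Dim (n : ℕ) : ℕ := n * (n + 1) / 2

/-- the coefficient `a_j` of `t_j` in the string inequality of the path `(k, ms)`:
`+1` if the path switches at `t_j` from `ℓ_r` to `ℓ_s` with `r < s`,
`-1` if it switches with `r > s`, and `0` otherwise. -/
def coeff (w : List ℕ) (k : ℕ) (ms : List ℕ) (j : ℕ) : ℝ :=
  ((pathSwitches w k ms).map (fun e =>
    if e.1 = j then (if e.2.1 < e.2.2 then (1 : ℝ) else -1) else 0)).sum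

/-- the (primitive inward normal) coefficient vector of the string inequality of a path. -/
def normalVec (n : ℕ) (w : List ℕ) (p : ℕ × List ℕ) : Fin (Dim n) → ℝ :=
  fun j => coeff w p.1 p.2 ((j : ℕ) + 1)

/-- the left-hand side `∑ a_j t_j` of the string inequality of the path `p`. -/
def stringIneq (n : ℕ) (w : List ℕ) (p : ℕ × List ℕ) (t : Fin (Dim n) → ℝ) : ℝ :=
  ∑ j : Fin (Dim n), normalVec n w p j * t j

/-- the string cone `C_i ⊆ ℝ^N`. -/
def stringCone (n : ℕ) (w : List ℕ) : Set (Fin (Dim n) → ℝ) :=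
  {t | ∀ p ∈ GP n w, 0 ≤ stringIneq n w p t}

/-- the polyhedron cut out by all string inequalities except the one of `p₀`. -/
def stringConeExcept (n : ℕ) (w : List ℕ) (p₀ : ℕ × List ℕ) : Set (Fin (Dim n) → ℝ) :=
  {t | ∀ p ∈ GP n w, p ≠ p₀ → 0 ≤ stringIneq n w p t}

/-- the coefficient `a_k` in the `λ`-inequality of node `t_j`:
`1` if `t_k` is one column left or right of `t_j`, `-2` if in the same column. -/
def lamCoeff (w : List ℕ) (j k : ℕ) : ℝ :=
  if letterAt w k = letterAt w j then -2
  else if letterAt w k = letterAt w j + 1 ∨ letterAt w k + 1 = letterAt w j then 1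
  else 0

/-- the `λ`-inequality of node `t_{j+1}`:
`t_j ≤ λ_{i_j} + ∑_{k > j} a_k t_k`. -/
def LamIneq (n : ℕ) (w : List ℕ) (lam : ℕ → ℤ) (j : Fin (Dim n)) (t : Fin (Dim n) → ℝ) : Prop :=
  t j ≤ (lam (letterAt w ((j : ℕ) + 1)) : ℝ) +
    ∑ k : Fin (Dim n),
      (if (j : ℕ) < (k : ℕ) then lamCoeff w ((j : ℕ) + 1) ((k : ℕ) + 1) else 0) * t k

/-- the `λ`-cone `C_i^λ ⊆ ℝ^N`. -/
def lamCone (n : ℕ) (w : List ℕ) (lam : ℕ → ℤ) : Set (Fin (Dim n) → ℝ) :=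
  {t | ∀ j, LamIneq n w lam j t}

/-- the polyhedron cut out by all `λ`-inequalities except the one of `j₀`. -/
def lamConeExcept (n : ℕ) (w : List ℕ) (lam : ℕ → ℤ) (j₀ : Fin (Dim n)) :
    Set (Fin (Dim n) → ℝ) :=
  {t | ∀ j, j ≠ j₀ → LamIneq n w lam j t}

/-- the string polytope `Δ_i(λ) = C_i ∩ C_i^λ`. -/
def stringPolytope (n : ℕ) (w : List ℕ) (lam : ℕ → ℤ) : Set (Fin (Dim n) → ℝ) :=
  stringCone n w ∩ lamCone n w lam

/-- `λ = λ_1 ϖ_1 + ⋯ + λ_n ϖ_n` is a dominant integral weight: all `λ_j ≥ 0`. -/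
def Dominant (n : ℕ) (lam : ℕ → ℤ) : Prop := ∀ j, 1 ≤ j → j ≤ n → 0 ≤ lam j

/-- `λ` is a regular dominant integral weight: all `λ_j > 0`. -/
def RegularDominant (n : ℕ) (lam : ℕ → ℤ) : Prop := ∀ j, 1 ≤ j → j ≤ n → 0 < lam j

/-! ### Unimodular equivalence, Gelfand–Cetlin polytope, facets -/

/-- `P` and `Q` are unimodularly equivalent: `Q = M(P) + v` with `M ∈ GL(m, ℤ)`, `v ∈ ℤ^m`. -/
def UnimodEquiv {m : ℕ} (P Q : Set (Fin m → ℝ)) : Prop :=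
  ∃ (M : Matrix (Fin m) (Fin m) ℤ) (v : Fin m → ℤ), IsUnit M.det ∧
    Q = (fun x i => (∑ j, (M i j : ℝ) * x j) + (v i : ℝ)) '' P

/-- the entry `x_{k,j}` (`1 ≤ j ≤ k ≤ n+1`) of a Gelfand–Cetlin pattern, where the
top row is `x_{n+1,j} = λ_j + ⋯ + λ_n` and `x_{n+1,n+1} = 0`; the pair `(k, j)` is
encoded as the coordinate `k(k-1)/2 + (j-1)` of `ℝ^N`. -/
def gcX (n : ℕ) (lam : ℕ → ℤ) (x : Fin (Dim n) → ℝ) (k j : ℕ) : ℝ :=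
  if k = n + 1 then (if j ≤ n then ∑ t ∈ Finset.Icc j n, (lam t : ℝ) else 0)
  else if h : k * (k - 1) / 2 + (j - 1) < Dim n then x ⟨k * (k - 1) / 2 + (j - 1), h⟩ else 0

/-- the Gelfand–Cetlin polytope `GC(λ) ⊆ ℝ^N`. -/
def GCPolytope (n : ℕ) (lam : ℕ → ℤ) : Set (Fin (Dim n) → ℝ) :=
  {x | ∀ k j, 1 ≤ k → k ≤ n → 1 ≤ j → j ≤ k →
      gcX n lam x k j ≤ gcX n lam x (k + 1) j ∧
      gcX n lam x (k + 1) (j + 1) ≤ gcX n lam x k j}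

/-- a face of a convex set: a convex extreme subset. -/
def IsFaceSet {m : ℕ} (S F : Set (Fin m → ℝ)) : Prop := IsExtreme ℝ S F ∧ Convex ℝ F

/-- a facet: a maximal proper face. -/
def IsFacet {m : ℕ} (S F : Set (Fin m → ℝ)) : Prop :=
  IsFaceSet S F ∧ F ≠ S ∧ ∀ G, IsFaceSet S G → G ≠ S → F ⊆ G → F = G

/-- the number of facets. -/
def numFacets {m : ℕ} (S : Set (Fin m → ℝ)) : ℕ := {F | IsFacet S F}.ncard

/-- combinatorial equivalence: an inclusion-preserving bijection between face lattices. -/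
def CombEquiv {m : ℕ} (S T : Set (Fin m → ℝ)) : Prop :=
  ∃ e : {F // IsFaceSet S F} ≃ {F // IsFaceSet T F},
    ∀ F G : {F // IsFaceSet S F}, F.1 ⊆ G.1 ↔ (e F).1 ⊆ (e G).1

/-! ### Indices, contractions and extensions -/

/-- the `D`-index `ind_D(i) = |i_D^+|` for a decomposition `i ∼ i_D^- D_n i_D^+`
(independent of the decomposition). -/
def indD (n : ℕ) (w : List ℕ) : ℕ :=
  sInf {s | ∃ u v : List ℕ, v.length = s ∧ TwoMoveEquiv w (u ++ descWord n ++ v)}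

/-- the `A`-index `ind_A(i) = |i_A^+|` for a decomposition `i ∼ i_A^- A_n i_A^+`. -/
def indA (n : ℕ) (w : List ℕ) : ℕ :=
  sInf {s | ∃ u v : List ℕ, v.length = s ∧ TwoMoveEquiv w (u ++ ascWord n ++ v)}

/-- `w'` is a `D`-contraction `C_D(w) = i_D^- (i_D^+ - 1)` of `w ∈ Σ_{n+1}`. -/
def IsContractionD (n : ℕ) (w w' : List ℕ) : Prop :=
  ∃ u v : List ℕ, TwoMoveEquiv w (u ++ descWord n ++ v) ∧ w' = u ++ v.map (· - 1)

/-- `w'` is an `A`-contraction `C_A(w) = (i_A^- - 1) i_A^+` of `w ∈ Σ_{n+1}`. -/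
def IsContractionA (n : ℕ) (w w' : List ℕ) : Prop :=
  ∃ u v : List ℕ, TwoMoveEquiv w (u ++ ascWord n ++ v) ∧ w' = u.map (· - 1) ++ v

/-- the `D`-extension `E_D(s) : Σ_{n+1} → Σ_{n+2}`,
`i = i^-(s) i^+(s) ↦ i^-(s) D_{n+1} (i^+(s) + 1)` where `|i^+(s)| = s`. -/
def extD (n : ℕ) (s : ℕ) (w : List ℕ) : List ℕ :=
  w.take (w.length - s) ++ descWord (n + 1) ++ (w.drop (w.length - s)).map (· + 1)

/-- the `A`-extension `E_A(s) : Σ_{n+1} → Σ_{n+2}`,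
`i = i^-(s) i^+(s) ↦ (i^-(s) + 1) A_{n+1} i^+(s)`. -/
def extA (n : ℕ) (s : ℕ) (w : List ℕ) : List ℕ :=
  (w.take (w.length - s)).map (· + 1) ++ ascWord (n + 1) ++ w.drop (w.length - s)

/-- there exists `(σ_1, …, σ_n) ∈ {A, D}^n` (here `true = D`, `false = A`) such that
`ind_{σ_k}(C_{σ_{k+1}} ∘ ⋯ ∘ C_{σ_n}(i)) = 0` for all `k = n, …, 1`. -/
def SimplicialWord (n : ℕ) (w : List ℕ) : Prop :=
  ∃ (σ : ℕ → Bool) (c : ℕ → List ℕ), c n = w ∧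
    ∀ k, 1 ≤ k → k ≤ n →
      (if σ k then IsContractionD k (c k) (c (k - 1)) ∧ indD k (c k) = 0
       else IsContractionA k (c k) (c (k - 1)) ∧ indA k (c k) = 0)


/-- the `D`-coindex `coind_D(i) = |i_D^-|`. -/
def coindD (n : ℕ) (w : List ℕ) : ℕ :=
  sInf {s | ∃ u v : List ℕ, u.length = s ∧ TwoMoveEquiv w (u ++ descWord n ++ v)}

/-- the `A`-coindex `coind_A(i) = |i_A^-|`. -/
def coindA (n : ℕ) (w : List ℕ) : ℕ :=
  sInf {s | ∃ u v : List ℕ, u.length = s ∧ TwoMoveEquiv w (u ++ ascWord n ++ v)}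

/-- the `a`-th (0-based) coordinate of a point of `ℝ^N`. -/
def entry (n : ℕ) (t : Fin (Dim n) → ℝ) (a : ℕ) : ℝ :=
  if h : a < Dim n then t ⟨a, h⟩ else 0

/-- the product of cones
`t_1 ≥ 0`, `t_2 ≥ t_3 ≥ 0`, …, `t_{N-n+1} ≥ ⋯ ≥ t_N ≥ 0` (in `ℝ^N`, 1-based:
for `k = 1, …, n` the chain `t_{k(k-1)/2+1} ≥ ⋯ ≥ t_{k(k-1)/2+k} ≥ 0`). -/
def chainCone (n : ℕ) : Set (Fin (Dim n) → ℝ) :=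
  {t | ∀ k j, 1 ≤ k → k ≤ n → 1 ≤ j → j ≤ k →
    (if j = k then 0 else entry n t (k * (k - 1) / 2 + j)) ≤
      entry n t (k * (k - 1) / 2 + (j - 1))}

/-!
For fixed `k`, a rigorous path of `G(i,k)` is determined by the set of its switches. Every potential
on the wires gives a point of `ℝ^N` at which a string form takes the sum of the drops of the
potential over the switches of the path. Suitable potentials make this the flow of the path through
a given edge of the diagram, which is `0` or the orientation `±1` of the edge, since no node is
visited twice. The points obtained from the edges leaving the nodes downward form a triangular
system, so these flows determine the path: the paths of `G(i,k)` are distinct vertices of a box, and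
each of them is exposed by a linear functional.

For a potential that is constant along each wire the sum telescopes and depends only on `k`. One
such potential separates a given `k` from all the others, so every string form is exposed among all
of them; another one gives a point where all string forms equal `1`, which lets us move the exposing
point to a point of the cone lying on the corresponding wall and on no other. Such points make every
inequality irredundant, and the facets of an irredundant cone correspond to its inequalities.
-/

section PolyhedralCone

variable {ι V : Type*} [AddCommGroup V] [Module ℝ V] {φ : ι → Module.Dual ℝ V}

/-- The convex cone on which all functionals of the family `φ` are nonnegative. -/
def polyhedralCone (φ : ι → Module.Dual ℝ V) : Set V := {t | ∀ p, 0 ≤ φ p t}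

/-- The face of the polyhedral cone of `φ` on which `φ p` vanishes. -/
def wall (φ : ι → Module.Dual ℝ V) (p : ι) : Set V := {t ∈ polyhedralCone φ | φ p t = 0}

/-- The point `z` of the polyhedral cone of `φ` lies on the wall of `p` and on no other wall.
Such points certify that the inequality `0 ≤ φ p` is irredundant and defines a facet. -/
def OnlyOnWall (φ : ι → Module.Dual ℝ V) (p : ι) (z : V) : Prop :=
  φ p z = 0 ∧ ∀ q, q ≠ p → 0 < φ q z

theorem OnlyOnWall.mem_wall {p : ι} {z : V} (hz : OnlyOnWall φ p z) : z ∈ wall φ p := by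
  refine ⟨fun q => ?_, hz.1⟩
  obtain rfl | hqp := eq_or_ne q p
  exacts [hz.1.ge, (hz.2 q hqp).le]

theorem onlyOnWall_sub_smul {p : ι} {t u : V} (ht : ∀ q, φ q t = 1)
    (hu : ∀ q, q ≠ p → φ p u < φ q u) : OnlyOnWall φ p (u - φ p u • t) := by
  constructor
  · simp [ht]
  · intro q hqp
    simpa [ht] using hu q hqp

theorem convex_polyhedralCone : Convex ℝ (polyhedralCone φ) := by
  intro x hx y hy a b ha hb _ p
  simpa using add_nonneg (mul_nonneg ha (hx p)) (mul_nonneg hb (hy p))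

theorem convex_wall (p : ι) : Convex ℝ (wall φ p) := by
  intro x hx y hy a b ha hb hab
  exact ⟨convex_polyhedralCone hx.1 hy.1 ha hb hab, by simp [hx.2, hy.2]⟩

theorem isExtreme_wall (p : ι) : IsExtreme ℝ (polyhedralCone φ) (wall φ p) := by
  refine ⟨fun x hx => hx.1, ?_⟩
  rintro x hx y hy _ hxy ⟨a, b, ha, hb, -, rfl⟩
  have hsum : a * φ p x + b * φ p y = 0 := by simpa using hxy.2
  have hax : a * φ p x = 0 := by
    linarith [mul_nonneg ha.le (hx p), mul_nonneg hb.le (hy p)]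
  exact ⟨hx, (mul_eq_zero.1 hax).resolve_left ha.ne'⟩

theorem exists_pos_forall_mul_lt [Finite ι] {a b : ι → ℝ} (ha : ∀ p, 0 < a p) :
    ∃ ε > 0, ∀ p, ε * b p < a p := by
  have hlim (p : ι) : Filter.Tendsto (fun ε => ε * b p) (nhdsWithin 0 (Set.Ioi 0)) (nhds 0) := by
    simpa using (Filter.tendsto_id.mul_const (b p)).mono_left
      (nhdsWithin_le_nhds (a := (0 : ℝ)) (s := Set.Ioi 0))
  have hpos : ∀ᶠ ε : ℝ in nhdsWithin 0 (Set.Ioi 0), 0 < ε := self_mem_nhdsWithin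
  have hsmall := Filter.eventually_all.2 fun p => (hlim p).eventually_lt_const (ha p)
  exact (hpos.and hsmall).exists

theorem exists_neg_forall_nonneg [Finite ι] {p : ι} {t z : V} (hz : OnlyOnWall φ p z)
    (ht : 0 < φ p t) : ∃ u, φ p u < 0 ∧ ∀ q, q ≠ p → 0 ≤ φ q u := by
  obtain ⟨ε, hε, hlt⟩ := exists_pos_forall_mul_lt (ι := {q // q ≠ p}) (b := fun q => φ q t)
    fun q => hz.2 q q.2
  refine ⟨z - ε • t, ?_, fun q hqp => ?_⟩
  · simpa [hz.1] using mul_pos hε ht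
  · simpa using (hlt ⟨q, hqp⟩).le

/-- A point of `F` in the interior of the cone can be prolonged beyond itself, away from any
point of the cone, without leaving the cone. -/
theorem eq_polyhedralCone_of_isExtreme [Finite ι] {F : Set V} {y : V}
    (hF : IsExtreme ℝ (polyhedralCone φ) F) (hyF : y ∈ F) (hy : ∀ p, 0 < φ p y) :
    F = polyhedralCone φ := by
  refine hF.subset.antisymm fun x hx => ?_
  obtain ⟨ε, hε, hlt⟩ := exists_pos_forall_mul_lt (b := fun p => φ p x) hy
  have hprolong : y + ε • (y - x) ∈ polyhedralCone φ := by
    intro p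
    have hεy := mul_pos hε (hy p)
    have hεx := hlt p
    simp only [map_add, map_smul, map_sub, smul_eq_mul, mul_sub]
    linarith
  refine hF.left_mem_of_mem_openSegment hx hprolong hyF
    ⟨ε / (1 + ε), 1 / (1 + ε), by positivity, by positivity, by field_simp; ring, ?_⟩
  match_scalars <;> field_simp
  ring

theorem exists_mem_forall_pos [Finite ι] [Nonempty ι] {F : Set V} (hF : F ⊆ polyhedralCone φ)
    (hconv : Convex ℝ F) (hpos : ∀ p, ∃ y ∈ F, 0 < φ p y) : ∃ y ∈ F, ∀ p, 0 < φ p y := by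
  have := Fintype.ofFinite ι
  choose y hyF hy using hpos
  refine ⟨∑ p, (Fintype.card ι : ℝ)⁻¹ • y p,
    hconv.sum_mem (fun _ _ => by positivity) (by simp) fun p _ => hyF p, fun q => ?_⟩
  have hcard : (0 : ℝ) < (Fintype.card ι : ℝ)⁻¹ := by simp [Fintype.card_pos]
  simp only [map_sum, map_smul, smul_eq_mul]
  exact Finset.sum_pos' (fun p _ => mul_nonneg hcard.le (hF (hyF p) q))
    ⟨q, Finset.mem_univ q, mul_pos hcard (hy q)⟩

end PolyhedralCone

section Facets

variable {ι : Type*} {m : ℕ} {φ : ι → Module.Dual ℝ (Fin m → ℝ)}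

theorem isFaceSet_wall (p : ι) : IsFaceSet (polyhedralCone φ) (wall φ p) :=
  ⟨isExtreme_wall p, convex_wall p⟩

theorem wall_ne_polyhedralCone {t : Fin m → ℝ} (ht : ∀ q, 0 < φ q t) (p : ι) :
    wall φ p ≠ polyhedralCone φ := by
  intro h
  have htp : t ∈ wall φ p := h ▸ fun q => (ht q).le
  exact (ht p).ne' htp.2

theorem isFacet_wall [Finite ι] {p : ι} {t z : Fin m → ℝ} (ht : ∀ q, 0 < φ q t)
    (hz : OnlyOnWall φ p z) : IsFacet (polyhedralCone φ) (wall φ p) := by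
  refine ⟨isFaceSet_wall p, wall_ne_polyhedralCone ht p, fun G hG hGne hwG => ?_⟩
  refine hwG.antisymm fun y hyG => ⟨hG.1.subset hyG, ?_⟩
  by_contra hne
  have hyC := hG.1.subset hyG
  have hyp : 0 < φ p y := (hyC p).lt_of_ne' hne
  have hmid : (1 / 2 : ℝ) • y + (1 / 2 : ℝ) • z ∈ G :=
    hG.2 hyG (hwG hz.mem_wall) (by norm_num) (by norm_num) (by norm_num)
  refine hGne (eq_polyhedralCone_of_isExtreme hG.1 hmid fun q => ?_)
  simp only [map_add, map_smul, smul_eq_mul]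
  obtain rfl | hqp := eq_or_ne q p
  · linarith [hz.1]
  · linarith [hz.2 q hqp, hyC q]

theorem setOf_isFacet_polyhedralCone [Finite ι] [Nonempty ι] {t : Fin m → ℝ}
    (ht : ∀ q, 0 < φ q t) (hz : ∀ p, ∃ z, OnlyOnWall φ p z) :
    {F | IsFacet (polyhedralCone φ) F} = Set.range (wall φ) := by
  refine Set.Subset.antisymm (fun F ⟨hF, hFne, hFmax⟩ => ?_) ?_
  · suffices hsub : ∃ p, F ⊆ wall φ p by
      obtain ⟨p, hp⟩ := hsub
      exact ⟨p, (hFmax _ (isFaceSet_wall p) (wall_ne_polyhedralCone ht p) hp).symm⟩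
    by_contra! hsub
    have hpos (p : ι) : ∃ y ∈ F, 0 < φ p y := by
      obtain ⟨y, hyF, hyw⟩ := Set.not_subset.1 (hsub p)
      have hyC := hF.1.subset hyF
      exact ⟨y, hyF, (hyC p).lt_of_ne' fun h => hyw ⟨hyC, h⟩⟩
    obtain ⟨y, hyF, hy⟩ := exists_mem_forall_pos hF.1.subset hF.2 hpos
    exact hFne (eq_polyhedralCone_of_isExtreme hF.1 hyF hy)
  · rintro _ ⟨p, rfl⟩
    obtain ⟨z, hzp⟩ := hz p
    exact isFacet_wall ht hzp

theorem wall_injective (hz : ∀ p, ∃ z, OnlyOnWall φ p z) : Function.Injective (wall φ) := by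
  intro p q h
  obtain ⟨z, hzp⟩ := hz p
  by_contra hpq
  have hzq : z ∈ wall φ q := h ▸ hzp.mem_wall
  exact (hzp.2 q (Ne.symm hpq)).ne' hzq.2

theorem numFacets_polyhedralCone [Finite ι] [Nonempty ι] {t : Fin m → ℝ}
    (ht : ∀ q, 0 < φ q t) (hz : ∀ p, ∃ z, OnlyOnWall φ p z) :
    numFacets (polyhedralCone φ) = Nat.card ι := by
  rw [numFacets, setOf_isFacet_polyhedralCone ht hz,
    Set.ncard_range_of_injective (wall_injective hz)]

end Facets

/-- The coefficient `a v + b v - 2 * c v` is the difference between the other element of the pair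
`{a v, b v}` and `c v`. -/
theorem sum_mul_lt_sum_mul_of_mem_pair {κ : Type*} [Fintype κ] {a b c x : κ → ℝ}
    (hc : ∀ v, c v = a v ∨ c v = b v) (hx : ∀ v, x v = a v ∨ x v = b v) (hne : x ≠ c) :
    ∑ v, (a v + b v - 2 * c v) * c v < ∑ v, (a v + b v - 2 * c v) * x v := by
  have hsq (v : κ) : (a v + b v - 2 * c v) * x v =
      (a v + b v - 2 * c v) * c v + (x v - c v) ^ 2 := by
    obtain h | h := hc v <;> obtain h' | h' := hx v <;> rw [h, h'] <;> ring
  obtain ⟨v, hv⟩ := Function.ne_iff.1 hne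
  simp only [hsq]
  exact Finset.sum_lt_sum (fun v _ => le_add_of_nonneg_right (sq_nonneg _))
    ⟨v, Finset.mem_univ v, lt_add_of_pos_right _ (by have := sub_ne_zero.2 hv; positivity)⟩

section Diagram

variable {w : List ℕ} {j r s : ℕ}

theorem wireX_ne_wireY (w : List ℕ) (j : ℕ) : wireX w j ≠ wireY w j :=
  (stateAbove w j).injective.ne (Nat.succ_ne_self _).symm

theorem otherWire_eq (hr : NodeOnWire w j r) (hs : NodeOnWire w j s) (hrs : r ≠ s) :
    otherWire w j r = s := by
  unfold NodeOnWire at hr hs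
  unfold otherWire
  split_ifs <;> omega

theorem mem_nodesOn : j ∈ nodesOn w r ↔ ValidNode w j ∧ NodeOnWire w j r := by
  simp only [nodesOn, ValidNode, List.mem_filter, List.mem_map, List.mem_range,
    decide_eq_true_eq, and_congr_left_iff]
  exact fun _ => ⟨by omega, fun h => ⟨j - 1, by omega⟩⟩

theorem mem_segList {a b : ℕ} :
    j ∈ segList w r a b ↔ (ValidNode w j ∧ NodeOnWire w j r) ∧ min a b < j ∧ j < max a b := by
  rw [segList, List.mem_filter, mem_nodesOn, decide_eq_true_eq]

theorem mem_tailList {a : ℕ} :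
    j ∈ tailList w r a ↔ (ValidNode w j ∧ NodeOnWire w j r) ∧ a < j := by
  rw [tailList, List.mem_filter, mem_nodesOn, decide_eq_true_eq]

theorem nodup_nodesOn (w : List ℕ) (r : ℕ) : (nodesOn w r).Nodup :=
  (List.nodup_range.map (add_left_injective 1)).filter _

theorem nodup_tailList (w : List ℕ) (r a : ℕ) : (tailList w r a).Nodup :=
  (nodup_nodesOn w r).filter _

theorem segList_length_add_one {m : ℕ} (hm : ValidNode w m) :
    segList w r (w.length + 1) m = tailList w r m := by
  refine List.filter_congr fun j hj => ?_
  have hj' := (mem_nodesOn.1 hj).1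
  unfold ValidNode at hm hj'
  simp only [decide_eq_decide]
  omega

end Diagram

section Travel

variable {n : ℕ} {w : List ℕ} {k r a m : ℕ} {ms ms' : List ℕ}

/-- A rigorous path is a travel entering `ℓ_k` from a virtual node below the diagram. -/
theorem isGPPath_iff : IsGPPath n w k ms ↔ 1 ≤ k ∧ k ≤ n ∧
    TravelOK w k k (w.length + 1) ms ∧ (visitTail w k (w.length + 1) ms).Nodup := by
  cases ms with
  | nil => simp [IsGPPath, TravelOK]
  | cons m ms =>
    by_cases hm : ValidNode w m
    · have hlt : m < w.length + 1 := Nat.lt_succ_of_le hm.2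
      simp [IsGPPath, TravelOK, visitList, visitTail, segList_length_add_one hm, hm, hlt]
    · simp [IsGPPath, TravelOK, hm]

theorem validNode_of_travelOK (h : TravelOK w k r a ms) : ∀ m ∈ ms, ValidNode w m := by
  induction ms generalizing r a with
  | nil => simp
  | cons m ms ih => exact List.forall_mem_cons.2 ⟨h.1, ih h.2.2.2.2⟩

theorem sublist_visitTail : ms.Sublist (visitTail w r a ms) := by
  induction ms generalizing r a with
  | nil => exact List.nil_sublist _
  | cons m ms ih => exact (ih.cons_cons m).trans (List.sublist_append_right _ _)

theorem notMem_segList_of_nodup {j : ℕ} (hnd : (visitTail w r a (m :: ms)).Nodup)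
    (hj : j ∈ m :: ms) : j ∉ segList w r a m := fun hseg =>
  (List.nodup_append.1 hnd).2.2 j hseg j ((sublist_visitTail.cons_cons m).subset hj) rfl

theorem travelOK_unique (h : TravelOK w k r a ms) (h' : TravelOK w k r a ms')
    (hnd : (visitTail w r a ms).Nodup) (hnd' : (visitTail w r a ms').Nodup)
    (hmem : ∀ j, j ∈ ms ↔ j ∈ ms') : ms = ms' := by
  induction ms generalizing r a ms' with
  | nil => exact (List.eq_nil_iff_forall_not_mem.2 fun j hj => by simpa using (hmem j).2 hj).symm
  | cons m ms ih =>
    cases ms' with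
    | nil => simpa using (hmem m).1 List.mem_cons_self
    | cons m' ms' =>
      have hm : m ∉ segList w r a m' :=
        notMem_segList_of_nodup hnd' ((hmem m).1 List.mem_cons_self)
      have hm' : m' ∉ segList w r a m :=
        notMem_segList_of_nodup hnd ((hmem m').2 List.mem_cons_self)
      obtain ⟨hv, hon, hdir, -, h⟩ := h
      obtain ⟨hv', hon', hdir', -, h'⟩ := h'
      obtain rfl : m = m' := by
        simp only [mem_segList, hv, hon, hv', hon', true_and] at hm hm'
        split_ifs at hdir hdir' <;> omega
      have hnd := List.nodup_cons.1 (List.nodup_append.1 hnd).2.1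
      have hnd' := List.nodup_cons.1 (List.nodup_append.1 hnd').2.1
      have hm : m ∉ ms := fun hmms => hnd.1 (sublist_visitTail.subset hmms)
      have hm' : m ∉ ms' := fun hmms => hnd'.1 (sublist_visitTail.subset hmms)
      rw [ih h h' hnd.2 hnd'.2 fun j => ?_]
      obtain rfl | hjm := eq_or_ne j m
      · simp [hm, hm']
      · simpa [hjm] using hmem j

theorem isGPPath_unique (h : IsGPPath n w k ms) (h' : IsGPPath n w k ms')
    (hmem : ∀ j, j ∈ ms ↔ j ∈ ms') : ms = ms' := by
  obtain ⟨-, -, ht, hnd⟩ := isGPPath_iff.1 h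
  obtain ⟨-, -, ht', hnd'⟩ := isGPPath_iff.1 h'
  exact travelOK_unique ht ht' hnd hnd' hmem

theorem nodup_of_isGPPath (h : IsGPPath n w k ms) : ms.Nodup :=
  (isGPPath_iff.1 h).2.2.2.sublist sublist_visitTail

theorem validNode_of_isGPPath (h : IsGPPath n w k ms) : ∀ m ∈ ms, ValidNode w m :=
  validNode_of_travelOK (isGPPath_iff.1 h).2.2.1

theorem finite_GP (n : ℕ) (w : List ℕ) : (GP n w).Finite := by
  have hfin := (Set.finite_Iic n).prod (Finset.finite_toSet (Finset.Iic w.length).powerset)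
  refine Set.Finite.of_injOn (f := fun p => (p.1, p.2.toFinset)) (fun p hp => ?_) ?_ hfin
  · refine ⟨hp.2.1, Finset.mem_coe.2 (Finset.mem_powerset.2 fun m hm => ?_)⟩
    exact Finset.mem_Iic.2 (validNode_of_isGPPath hp m (List.mem_toFinset.1 hm)).2
  · rintro ⟨k, ms⟩ hp ⟨k', ms'⟩ hp' heq
    obtain rfl : k = k' := congrArg Prod.fst heq
    have hms : ms.toFinset = ms'.toFinset := congrArg Prod.snd heq
    exact congrArg (Prod.mk k)
      (isGPPath_unique hp hp' fun j => by simpa using Finset.ext_iff.1 hms j)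

end Travel

section Potentials

variable {n : ℕ} {w : List ℕ} {k r a m j : ℕ} {ms : List ℕ} {h : ℕ → ℕ → ℝ}

/-- The sum of the drops `h j r - h j s` of a potential `h` over the switches of a path, where
the switch at the node `t_j` goes from `ℓ_r` to `ℓ_s`. -/
def switchSum (w : List ℕ) (h : ℕ → ℕ → ℝ) (r : ℕ) (ms : List ℕ) : ℝ :=
  ((pathSwitches w r ms).map fun e => h e.1 e.2.1 - h e.1 e.2.2).sum

theorem switchSum_nil : switchSum w h r [] = 0 := rfl

theorem switchSum_cons : switchSum w h r (m :: ms) =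
    h m r - h m (otherWire w m r) + switchSum w h (otherWire w m r) ms := by
  simp [switchSum, pathSwitches]

theorem coeff_cons : coeff w r (m :: ms) j =
    (if m = j then if r < otherWire w m r then 1 else -1 else 0) +
      coeff w (otherWire w m r) ms j := by
  simp [coeff, pathSwitches]

theorem coeff_ne_zero_iff (hnd : ms.Nodup) : coeff w r ms j ≠ 0 ↔ j ∈ ms := by
  induction ms generalizing r with
  | nil => simp [coeff, pathSwitches]
  | cons m ms ih =>
    obtain ⟨hm, hnd⟩ := List.nodup_cons.1 hnd
    have ih := ih (r := otherWire w m r) hnd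
    rw [coeff_cons]
    obtain rfl | hmj := eq_or_ne m j
    · rw [if_pos rfl, not_not.1 (mt ih.1 hm)]
      split_ifs <;> simp
    · simpa [hmj, hmj.symm] using ih

/-- The linear functional on `ℝ^N` given by the left-hand side of the string inequality. -/
def stringForm (n : ℕ) (w : List ℕ) (p : ℕ × List ℕ) : Module.Dual ℝ (Fin (Dim n) → ℝ) :=
  ∑ j, normalVec n w p j • LinearMap.proj j

theorem stringForm_apply (p : ℕ × List ℕ) (t : Fin (Dim n) → ℝ) :
    stringForm n w p t = stringIneq n w p t := by
  simp [stringForm, stringIneq]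

theorem stringForm_cons (hm : 1 ≤ m) (t : Fin (Dim n) → ℝ) : stringForm n w (r, m :: ms) t =
    (if r < otherWire w m r then 1 else -1) * entry n t (m - 1) +
      stringForm n w (otherWire w m r, ms) t := by
  have hindex (i : Fin (Dim n)) : m = i + 1 ↔ (i : ℕ) = m - 1 := by omega
  have hsingle : ∑ i : Fin (Dim n), (if (i : ℕ) = m - 1 then t i else 0) = entry n t (m - 1) := by
    unfold entry
    split_ifs with hlt
    · simp [← Fin.ext_iff (b := ⟨m - 1, hlt⟩)]
    · exact Finset.sum_eq_zero fun i _ => if_neg (by omega)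
  simp only [stringForm_apply, stringIneq, normalVec, coeff_cons, add_mul,
    Finset.sum_add_distrib, hindex, ← hsingle, Finset.mul_sum, ite_mul, zero_mul, mul_ite, mul_zero]

/-- The point of `ℝ^N` whose coordinate `t_j` is the drop of the potential `h` from the smaller
to the larger of the two wires crossing at `t_j`. -/
def potentialPoint (n : ℕ) (w : List ℕ) (h : ℕ → ℕ → ℝ) : Fin (Dim n) → ℝ := fun j =>
  h (j + 1) (min (wireX w (j + 1)) (wireY w (j + 1))) -
    h (j + 1) (max (wireX w (j + 1)) (wireY w (j + 1)))

theorem entry_potentialPoint (hm : ValidNode w m) (hw : w.length ≤ Dim n) :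
    entry n (potentialPoint n w h) (m - 1) =
      h m (min (wireX w m) (wireY w m)) - h m (max (wireX w m) (wireY w m)) := by
  have hlt : m - 1 < Dim n := (Nat.sub_one_lt_of_le hm.1 hm.2).trans_le hw
  simp [entry, hlt, potentialPoint, Nat.sub_add_cancel hm.1]

theorem sign_mul_drop_eq (f : ℕ → ℝ) (hon : NodeOnWire w m r) :
    (if r < otherWire w m r then 1 else -1) *
      (f (min (wireX w m) (wireY w m)) - f (max (wireX w m) (wireY w m))) =
    f r - f (otherWire w m r) := by
  have hends : min (wireX w m) (wireY w m) = min r (otherWire w m r) ∧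
      max (wireX w m) (wireY w m) = max r (otherWire w m r) := by
    unfold NodeOnWire at hon
    unfold otherWire
    split_ifs <;> omega
  rw [hends.1, hends.2]
  split_ifs with hlt
  · rw [min_eq_left hlt.le, max_eq_right hlt.le, one_mul]
  · rw [min_eq_right (not_lt.1 hlt), max_eq_left (not_lt.1 hlt)]
    ring

theorem stringForm_potentialPoint_of_travelOK (hw : w.length ≤ Dim n)
    (ht : TravelOK w k r a ms) (h : ℕ → ℕ → ℝ) :
    stringForm n w (r, ms) (potentialPoint n w h) = switchSum w h r ms := by
  induction ms generalizing r a with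
  | nil => simp [stringForm_apply, stringIneq, normalVec, coeff, pathSwitches, switchSum_nil]
  | cons m ms ih =>
    obtain ⟨hv, hon, -, -, ht⟩ := ht
    rw [stringForm_cons hv.1, entry_potentialPoint hv hw, sign_mul_drop_eq _ hon, ih ht,
      switchSum_cons]

theorem switchSum_const (ht : TravelOK w k r a ms) (f : ℕ → ℝ) :
    switchSum w (fun _ => f) r ms = f r - f (k + 1) := by
  induction ms generalizing r a with
  | nil => rw [switchSum_nil, ht.1, sub_self]
  | cons m ms ih => rw [switchSum_cons, ih ht.2.2.2.2, sub_add_sub_cancel]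

theorem stringForm_potentialPoint (hw : w.length ≤ Dim n) {p : ℕ × List ℕ} (hp : p ∈ GP n w)
    (h : ℕ → ℕ → ℝ) :
    stringForm n w p (potentialPoint n w h) = switchSum w h p.1 p.2 :=
  stringForm_potentialPoint_of_travelOK hw (isGPPath_iff.1 hp).2.2.1 h

theorem stringForm_potentialPoint_const (hw : w.length ≤ Dim n) {p : ℕ × List ℕ}
    (hp : p ∈ GP n w) (f : ℕ → ℝ) :
    stringForm n w p (potentialPoint n w fun _ => f) = f p.1 - f (p.1 + 1) := by
  rw [stringForm_potentialPoint hw hp, switchSum_const (isGPPath_iff.1 hp).2.2.1]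

end Potentials

section EdgeFlow

variable {n : ℕ} {w : List ℕ} {k ρ v r a m : ℕ} {ms : List ℕ}

/-- The potential whose switch sum is the net upward flow of a path through the edge of the wire
`ℓ_ρ` just below the node `t_v`: it counts the switches off `ℓ_ρ` minus those onto `ℓ_ρ` at nodes
not below `t_v`. -/
def edgePotential (ρ v : ℕ) : ℕ → ℕ → ℝ := fun m r => if m ≤ v ∧ r = ρ then 1 else 0

/-- The number of times that a travel uses the edge of the wire `ℓ_ρ` just below the node
`t_v`. -/
def edgeCount (w : List ℕ) (ρ v : ℕ) : ℕ → ℕ → List ℕ → ℕ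
  | r, a, [] => if a ≤ v ∧ r = ρ then 1 else 0
  | r, a, m :: ms => (if (min a m ≤ v ∧ v < max a m) ∧ r = ρ then 1 else 0) +
      edgeCount w ρ v (otherWire w m r) m ms

/-- The orientation of the wire `ℓ_ρ` in `G(i,k)`: `1` for upward and `-1` for downward. -/
def orientation (k ρ : ℕ) : ℝ := if ρ ≤ k then 1 else -1

theorem edgePotential_sub (hdir : if r ≤ k then m < a else a < m) :
    edgePotential ρ v m r - edgePotential ρ v a r =
      orientation k ρ * if (min a m ≤ v ∧ v < max a m) ∧ r = ρ then 1 else 0 := by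
  unfold edgePotential orientation
  obtain rfl | hr := eq_or_ne r ρ
  · split_ifs at hdir ⊢ <;> first | omega | norm_num
  · simp [hr]

theorem switchSum_edgePotential (ht : TravelOK w k r a ms) :
    switchSum w (edgePotential ρ v) r ms - edgePotential ρ v a r =
      orientation k ρ * edgeCount w ρ v r a ms := by
  induction ms generalizing r a with
  | nil =>
    obtain ⟨rfl, -⟩ := ht
    obtain rfl | hρ := eq_or_ne (k + 1) ρ
    · simp [switchSum_nil, edgePotential, edgeCount, orientation, neg_ite]
    · simp [switchSum_nil, edgePotential, edgeCount, hρ]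
  | cons m ms ih =>
    obtain ⟨-, -, hdir, -, ht⟩ := ht
    rw [switchSum_cons, edgeCount, Nat.cast_add, mul_add, ← ih ht, Nat.cast_ite, Nat.cast_one,
      Nat.cast_zero, ← edgePotential_sub hdir]
    ring

/-- An upward edge is charged to the node at which it ends, a downward one to the node at which
it begins; the latter may be the starting node of the travel. -/
theorem edgeCount_le_count (hv : ValidNode w v) (hon : NodeOnWire w v ρ)
    (ht : TravelOK w k r a ms) : edgeCount w ρ v r a ms ≤
      (if ρ ≤ k then visitTail w r a ms else a :: visitTail w r a ms).count v := by
  induction ms generalizing r a with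
  | nil =>
    obtain ⟨rfl, -⟩ := ht
    unfold edgeCount
    split_ifs with hedge hρ
    · omega
    · obtain ⟨hav, rfl⟩ := hedge
      refine List.one_le_count_iff.2 (List.mem_cons.2 ?_)
      exact hav.eq_or_lt'.imp_right fun hlt => mem_tailList.2 ⟨⟨hv, hon⟩, hlt⟩
    all_goals exact Nat.zero_le _
  | cons m ms ih =>
    obtain ⟨-, -, hdir, -, ht⟩ := ht
    have ih := ih ht
    have hseg (hav : min a m < v ∧ v < max a m) (hr : r = ρ) :
        1 ≤ (segList w r a m).count v :=
      List.one_le_count_iff.2 (mem_segList.2 ⟨⟨hv, hr ▸ hon⟩, hav⟩)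
    unfold edgeCount visitTail
    by_cases hρ : ρ ≤ k <;>
      simp only [hρ, if_true, if_false, List.count_append, List.count_cons, beq_iff_eq] at ih ⊢ <;>
      grind

theorem switchSum_edgePotential_mem (hp : IsGPPath n w k ms) (hv : ValidNode w v)
    (hon : NodeOnWire w v ρ) : switchSum w (edgePotential ρ v) k ms = 0 ∨
      switchSum w (edgePotential ρ v) k ms = orientation k ρ := by
  obtain ⟨-, -, ht, hnd⟩ := isGPPath_iff.1 hp
  have hstart : ¬ w.length + 1 ≤ v := not_le.2 (Nat.lt_succ_of_le hv.2)
  have hsum := switchSum_edgePotential (ρ := ρ) (v := v) ht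
  have hcount : edgeCount w ρ v k (w.length + 1) ms ≤ 1 := by
    refine (edgeCount_le_count hv hon ht).trans ?_
    have hle := List.nodup_iff_count_le_one.1 hnd v
    split_ifs
    · exact hle
    · rwa [List.count_cons_of_ne (by omega)]
  simp only [edgePotential, hstart, false_and, if_false, sub_zero] at hsum
  rw [hsum]
  interval_cases edgeCount w ρ v k (w.length + 1) ms <;> simp

end EdgeFlow

section Exposed

variable {n : ℕ} {w : List ℕ} {p q : ℕ × List ℕ}

/-- The point of `ℝ^N` whose pairing with the string inequality of a path is the net upward flow
of that path through the edge just below the `v`-th node (counted from `0`) of the wire leaving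
that node upward-left. -/
def edgePoint (n : ℕ) (w : List ℕ) (v : ℕ) : Fin (Dim n) → ℝ :=
  potentialPoint n w (edgePotential (wireX w (v + 1)) (v + 1))

theorem edgePoint_of_lt {v : ℕ} {j : Fin (Dim n)} (h : v < j) : edgePoint n w v j = 0 := by
  simp [edgePoint, potentialPoint, edgePotential, not_le.2 h]

theorem edgePoint_self_ne_zero (j : Fin (Dim n)) : edgePoint n w j j ≠ 0 := by
  have hne := wireX_ne_wireY w (j + 1)
  obtain hlt | hlt := lt_or_gt_of_ne hne
  · simp [edgePoint, potentialPoint, edgePotential, hlt.le, hne.symm]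
  · simp [edgePoint, potentialPoint, edgePotential, hlt.le, hne.symm]

theorem stringForm_edgePoint_mem (hw : w.length ≤ Dim n) (hp : p ∈ GP n w) (v : Fin w.length) :
    stringForm n w p (edgePoint n w v) = 0 ∨
      stringForm n w p (edgePoint n w v) = orientation p.1 (wireX w (v + 1)) := by
  rw [edgePoint, stringForm_potentialPoint hw hp]
  exact switchSum_edgePotential_mem hp ⟨Nat.succ_pos _, v.2⟩ (Or.inl rfl)

/-- The points `edgePoint n w v` form a triangular system in the first `w.length` coordinates. -/
theorem normalVec_eq_of_stringForm_edgePoint_eq (hw : w.length ≤ Dim n)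
    (h : ∀ v : Fin w.length,
      stringForm n w p (edgePoint n w v) = stringForm n w q (edgePoint n w v))
    (v : Fin w.length) :
    normalVec n w p (v.castLE hw) = normalVec n w q (v.castLE hw) := by
  induction v using WellFoundedLT.induction with
  | ind v ih =>
    have hdiff : ∑ j, (normalVec n w p j - normalVec n w q j) * edgePoint n w v j = 0 := by
      have := h v
      rw [stringForm_apply, stringForm_apply, stringIneq, stringIneq, ← sub_eq_zero,
        ← Finset.sum_sub_distrib] at this
      simpa only [sub_mul] using this
    rw [Finset.sum_eq_single (v.castLE hw)] at hdiff
    · exact sub_eq_zero.1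
        ((mul_eq_zero.1 hdiff).resolve_right (edgePoint_self_ne_zero (v.castLE hw)))
    · intro j _ hj
      obtain hlt | hlt := lt_or_gt_of_ne (Fin.val_ne_of_ne hj)
      · rw [show j = (⟨j, hlt.trans v.2⟩ : Fin w.length).castLE hw from rfl, ih ⟨j, _⟩ hlt,
          sub_self, zero_mul]
      · rw [edgePoint_of_lt (v := v) hlt, mul_zero]
    · simp

theorem eq_of_stringForm_edgePoint_eq (hw : w.length ≤ Dim n) (hp : p ∈ GP n w) (hq : q ∈ GP n w)
    (hpq : p.1 = q.1) (h : ∀ v : Fin w.length,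
      stringForm n w p (edgePoint n w v) = stringForm n w q (edgePoint n w v)) : p = q := by
  obtain ⟨k, ms⟩ := p
  obtain ⟨k', ms'⟩ := q
  obtain rfl : k = k' := hpq
  refine congrArg (Prod.mk k) (isGPPath_unique hp hq fun j => ?_)
  have hcoeff (hj : ValidNode w j) : coeff w k ms j = coeff w k ms' j := by
    have := normalVec_eq_of_stringForm_edgePoint_eq hw h ⟨j - 1, Nat.sub_one_lt_of_le hj.1 hj.2⟩
    simpa [normalVec, Nat.sub_add_cancel hj.1] using this
  rw [← coeff_ne_zero_iff (w := w) (r := k) (nodup_of_isGPPath hp),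
    ← coeff_ne_zero_iff (w := w) (r := k) (nodup_of_isGPPath hq)]
  by_cases hj : ValidNode w j
  · rw [hcoeff hj]
  · rw [coeff_ne_zero_iff (nodup_of_isGPPath hp), coeff_ne_zero_iff (nodup_of_isGPPath hq)]
    exact iff_of_false (mt (validNode_of_isGPPath hp j) hj) (mt (validNode_of_isGPPath hq j) hj)

/-- In the coordinates given by the edge flows the paths of `G(i,k)` are distinct vertices of a
box. -/
theorem exists_stringForm_lt_of_fst_eq (hw : w.length ≤ Dim n) (hp : p ∈ GP n w) :
    ∃ u, ∀ q ∈ GP n w, q ≠ p → q.1 = p.1 → stringForm n w p u < stringForm n w q u := by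
  let flow (q : ℕ × List ℕ) (v : Fin w.length) : ℝ := stringForm n w q (edgePoint n w v)
  let σ (v : Fin w.length) : ℝ := orientation p.1 (wireX w (v + 1))
  refine ⟨∑ v : Fin w.length, (0 + σ v - 2 * flow p v) • edgePoint n w v,
    fun q hq hqp hk => ?_⟩
  simp only [map_sum, map_smul, smul_eq_mul]
  refine sum_mul_lt_sum_mul_of_mem_pair (c := flow p) (x := flow q)
    (stringForm_edgePoint_mem hw hp) (fun v => ?_) fun h => ?_
  · simpa only [hk] using stringForm_edgePoint_mem hw hq v
  · exact hqp (eq_of_stringForm_edgePoint_eq hw hq hp hk (congrFun h))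

theorem exists_stringForm_lt (hw : w.length ≤ Dim n) (hp : p ∈ GP n w) :
    ∃ u, ∀ q ∈ GP n w, q ≠ p → stringForm n w p u < stringForm n w q u := by
  obtain ⟨u, hu⟩ := exists_stringForm_lt_of_fst_eq hw hp
  let level : Fin (Dim n) → ℝ := potentialPoint n w fun _ r => if r ≤ p.1 then 1 else 0
  have hlevel {q} (hq : q ∈ GP n w) : stringForm n w q level = if q.1 = p.1 then 1 else 0 := by
    rw [stringForm_potentialPoint_const hw hq]
    split_ifs <;> first | omega | norm_num
  obtain ⟨M, hM⟩ := ((finite_GP n w).image fun q =>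
    stringForm n w p u - stringForm n w q u).bddAbove
  refine ⟨u - (M + 1) • level, fun q hq hqp => ?_⟩
  simp only [map_sub, map_smul, hlevel hp, hlevel hq, smul_eq_mul, if_true, mul_one]
  split_ifs with hk
  · simpa using hu q hq hqp hk
  · linarith [hM (Set.mem_image_of_mem _ hq)]

theorem stringForm_potentialPoint_neg_id (hw : w.length ≤ Dim n) (hp : p ∈ GP n w) :
    stringForm n w p (potentialPoint n w fun _ r => -(r : ℝ)) = 1 := by
  rw [stringForm_potentialPoint_const hw hp]
  push_cast
  ring

end Exposed

section Nonempty

variable {n : ℕ} {w : List ℕ} {k m r s : ℕ}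

theorem stateBelow_eq (hm : ValidNode w m) :
    stateBelow w m = stateAbove w m * sTrans (letterAt w m) := by
  obtain ⟨m, rfl⟩ := Nat.exists_eq_add_one.2 hm.1
  have hlt : m < w.length := hm.2
  simp only [stateBelow, stateAbove, letterAt, wordProd, List.take_add_one,
    add_tsub_cancel_right, List.getElem?_eq_getElem hlt, List.getD_eq_getElem?_getD,
    Option.toList_some, Option.getD_some, List.map_append, List.map_cons, List.map_nil,
    List.prod_append, List.prod_singleton]

/-- Adjacent columns are exchanged, so only the two wires in them can change their order. -/
theorem nodeOnWire_of_state_lt (hm : ValidNode w m)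
    (habove : (stateAbove w m).symm r < (stateAbove w m).symm s)
    (hbelow : (stateBelow w m).symm s < (stateBelow w m).symm r) :
    NodeOnWire w m r ∧ NodeOnWire w m s := by
  set c := letterAt w m
  have hcol (x : ℕ) : (stateBelow w m).symm x = sTrans c ((stateAbove w m).symm x) := by
    rw [stateBelow_eq hm]
    rfl
  have hr : (stateAbove w m).symm r = c := by
    simp only [hcol, sTrans, Equiv.swap_apply_def] at hbelow
    split_ifs at hbelow <;> omega
  have hs : (stateAbove w m).symm s = c + 1 := by
    simp only [hcol, sTrans, Equiv.swap_apply_def] at hbelow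
    split_ifs at hbelow <;> omega
  exact ⟨Or.inl ((Equiv.symm_apply_eq _).1 hr).symm, Or.inr ((Equiv.symm_apply_eq _).1 hs).symm⟩

theorem exists_crossing (hrs : r < s) (hinv : (wordProd w).symm s < (wordProd w).symm r) :
    ∃ m, ValidNode w m ∧ NodeOnWire w m r ∧ NodeOnWire w m s := by
  have htop : ¬ (stateBelow w 0).symm s < (stateBelow w 0).symm r := by
    exact not_lt.2 hrs.le
  have hbottom : (stateBelow w w.length).symm s < (stateBelow w w.length).symm r := by
    simpa [stateBelow] using hinv
  obtain ⟨t, ht, habove, hbelow⟩ : ∃ t < w.length,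
      ¬ (stateBelow w t).symm s < (stateBelow w t).symm r ∧
        (stateBelow w (t + 1)).symm s < (stateBelow w (t + 1)).symm r := by
    by_contra! hall
    have hnot (t : ℕ) (ht : t ≤ w.length) :
        ¬ (stateBelow w t).symm s < (stateBelow w t).symm r := by
      induction t with
      | zero => exact htop
      | succ t ih => exact (hall t ht (not_lt.1 (ih (by omega)))).not_gt
    exact hnot _ le_rfl hbottom
  have hv : ValidNode w (t + 1) := ⟨Nat.succ_pos t, ht⟩
  refine ⟨t + 1, hv, nodeOnWire_of_state_lt hv ?_ hbelow⟩
  exact (not_lt.1 habove).lt_of_ne ((stateBelow w t).symm.injective.ne hrs.ne)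

theorem exists_isGPPath_singleton (hk : 1 ≤ k) (hkn : k ≤ n)
    (hcross : ∃ m, ValidNode w m ∧ NodeOnWire w m k ∧ NodeOnWire w m (k + 1)) :
    ∃ m, IsGPPath n w k [m] := by
  let crossings := (Finset.Icc 1 w.length).filter fun m =>
    NodeOnWire w m k ∧ NodeOnWire w m (k + 1)
  have hmem {m : ℕ} : m ∈ crossings ↔
      ValidNode w m ∧ NodeOnWire w m k ∧ NodeOnWire w m (k + 1) := by
    simp [crossings, ValidNode]
  obtain ⟨m, hm, hmax⟩ := crossings.exists_max_image id (hcross.imp fun _ => hmem.2)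
  obtain ⟨hv, hon, hon'⟩ := hmem.1 hm
  have hother : otherWire w m k = k + 1 := otherWire_eq hon hon' (Nat.succ_ne_self k).symm
  refine ⟨m, hk, hkn, ⟨hv, hon, fun j _ => ?_, ?_⟩, ?_⟩
  · unfold Forbidden
    omega
  · rw [hother]
    refine ⟨rfl, fun j _ => ?_⟩
    unfold Forbidden
    omega
  · simp only [visitList, visitTail, hother]
    refine List.nodup_append'.2 ⟨nodup_tailList w k m,
      List.nodup_cons.2 ⟨?_, nodup_tailList w (k + 1) m⟩, ?_⟩
    · simp [mem_tailList]
    · intro j hj hj'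
      obtain ⟨hj, hlt⟩ := mem_tailList.1 hj
      obtain rfl | hj' := List.mem_cons.1 hj'
      · exact hlt.false
      · exact (hmax j (hmem.2 ⟨hj.1, hj.2, (mem_tailList.1 hj').1.2⟩)).not_gt hlt

theorem longestPerm_apply (hk : 1 ≤ k) (hkn : k ≤ n + 1) : longestPerm n k = n + 2 - k :=
  if_pos ⟨hk, hkn⟩

theorem GP_nonempty (hn : 1 ≤ n) (hw : wordProd w = longestPerm n) : (GP n w).Nonempty := by
  have hleft : (longestPerm n).symm (n + 1) = 1 := by
    rw [Equiv.symm_apply_eq, longestPerm_apply (by omega) (by omega)]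
    omega
  have hright : (longestPerm n).symm n = 2 := by
    rw [Equiv.symm_apply_eq, longestPerm_apply (by omega) (by omega)]
    omega
  obtain ⟨m, hm⟩ := exists_isGPPath_singleton hn le_rfl
    (exists_crossing (w := w) n.lt_succ_self (by rw [hw, hleft, hright]; exact one_lt_two))
  exact ⟨(n, [m]), hm⟩

end Nonempty

section StringCone

variable {n : ℕ} {w : List ℕ}

theorem polyhedralCone_stringForm (n : ℕ) (w : List ℕ) :
    polyhedralCone (fun p : GP n w => stringForm n w p) = stringCone n w := by
  ext t
  simp [polyhedralCone, stringCone, stringForm_apply]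

theorem exists_onlyOnWall_stringForm (hw : w.length ≤ Dim n) (p : GP n w) :
    ∃ z, OnlyOnWall (fun p : GP n w => stringForm n w p) p z := by
  obtain ⟨u, hu⟩ := exists_stringForm_lt hw p.2
  exact ⟨_, onlyOnWall_sub_smul (fun q => stringForm_potentialPoint_neg_id hw q.2)
    fun q hq => hu q q.2 (Subtype.coe_injective.ne hq)⟩

theorem exists_forall_stringForm_pos (hw : w.length ≤ Dim n) :
    ∃ t, ∀ p : GP n w, 0 < stringForm n w p t :=
  ⟨_, fun p => one_pos.trans_eq (stringForm_potentialPoint_neg_id hw p.2).symm⟩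

theorem stringConeExcept_ne_stringCone (hw : w.length ≤ Dim n) {p : ℕ × List ℕ}
    (hp : p ∈ GP n w) : stringConeExcept n w p ≠ stringCone n w := by
  have := (finite_GP n w).to_subtype
  obtain ⟨t, ht⟩ := exists_forall_stringForm_pos hw
  obtain ⟨z, hz⟩ := exists_onlyOnWall_stringForm hw ⟨p, hp⟩
  obtain ⟨u, hneg, hnonneg⟩ := exists_neg_forall_nonneg hz (ht ⟨p, hp⟩)
  simp only [stringForm_apply] at hneg hnonneg
  intro heq
  have hu : u ∈ stringConeExcept n w p := fun q hq hqp =>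
    hnonneg ⟨q, hq⟩ fun h => hqp (congrArg Subtype.val h)
  rw [heq] at hu
  exact hneg.not_ge (hu p hp)

end StringCone

theorem statement5_general (n : ℕ) (w : List ℕ) (hw : w.length ≤ Dim n)
    (hne : (GP n w).Nonempty) :
    (∀ p ∈ GP n w, stringConeExcept n w p ≠ stringCone n w) ∧
    numFacets (stringCone n w) = numGP n w := by
  refine ⟨fun p hp => stringConeExcept_ne_stringCone hw hp, ?_⟩
  have := (finite_GP n w).to_subtype
  have := hne.to_subtype
  obtain ⟨t, ht⟩ := exists_forall_stringForm_pos hw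
  rw [← polyhedralCone_stringForm, numFacets_polyhedralCone ht (exists_onlyOnWall_stringForm hw),
    numGP, Nat.card_coe_set_eq]

/-- non-redundancy of the string inequalities.
The system of string inequalities indexed by `GP(i)` is non-redundant for `C_i`:
removing any one of them changes the cone; equivalently the number of facets of
`C_i` equals `|GP(i)|`. -/
theorem statement5 (n : ℕ) (hn : 1 ≤ n) (i : List ℕ) (hi : IsReduced n i) :
    (∀ p ∈ GP n i, stringConeExcept n i p ≠ stringCone n i) ∧
    numFacets (stringCone n i) = numGP n i :=
  statement5_general n i hi.1.le (GP_nonempty hn hi.2.2)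

end StringPolytope
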